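/- Let k be a field and Q a connected finite acyclic non-Dynkin quiver. Then the graded dimensions of the quiver Heisenberg algebra ᵛΛ(Q) do not depend on the parameter: for any v, w ∈ k^{Q_0}, every n ≥ 0, and all vertices i, j ∈ Q_0, one has dim_k e_i (ᵛΛ(Q)_n) e_j = dim_k e_i (ʷΛ(Q)_n) e_j. In particular the formula for the Hilbert series of ᵛΛ(Q) valid for sincere v (i.e., v with all v_i ≠ 0) extends to arbitrary v ∈ k^{Q_0}. -/

import Mathlib

/-!
STATEMENT 6: Hilbert series of the quiver Heisenberg algebra
`ᵛΛ(Q) = k[z]Q̄ / (ρ_i - v_i z e_i)` of a connected finite acyclic non-Dynkin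
quiver: the graded pieces are finite dimensional and
`h_{ᵛΛ}(t) · (1 - C t + t²) · (1 - t²) = 1` over `k[[t]]`.

The algebra is presented as the quotient of the free algebra on generators
`e_i` (trivial paths, degree 0), `α`, `α*` (arrows of the double quiver,
degree 1) and a central variable `z` (degree 2) by the path-algebra
relations, the relations making `z` central, and the relations
`ρ_i = v_i z e_i`.
-/

/-- A finite quiver. -/
structure FinQuiver where
  r : ℕ
  Arrow : Type
  [instFintypeArrow : Fintype Arrow]
  src : Arrow → Fin r
  tgt : Arrow → Fin r

attribute [instance] FinQuiver.instFintypeArrow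

namespace FinQuiver

variable (Q : FinQuiver)

/-- The underlying graph of `Q` is connected. -/
def Connected : Prop :=
  ∀ i j : Fin Q.r, Relation.ReflTransGen
    (fun a b => ∃ e : Q.Arrow, (Q.src e = a ∧ Q.tgt e = b) ∨ (Q.src e = b ∧ Q.tgt e = a)) i j

/-- `Q` has no oriented cycles. -/
def Acyclic : Prop :=
  ∀ i : Fin Q.r, ¬ Relation.TransGen (fun a b => ∃ e : Q.Arrow, Q.src e = a ∧ Q.tgt e = b) i i

/-- The Tits quadratic form of `Q` on `ℝ^{Q₀}`. -/
def titsForm (x : Fin Q.r → ℝ) : ℝ :=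
  (∑ i, x i ^ 2) - ∑ e : Q.Arrow, x (Q.src e) * x (Q.tgt e)

/-- `Q` is Dynkin iff its Tits form is positive definite. -/
def IsDynkin : Prop := ∀ x : Fin Q.r → ℝ, x ≠ 0 → 0 < Q.titsForm x

/-- Adjacency matrix of `Q`. -/
def adjMatrix : Matrix (Fin Q.r) (Fin Q.r) ℕ := Matrix.of fun i j =>
  Fintype.card {e : Q.Arrow // Q.src e = i ∧ Q.tgt e = j}

/-- Adjacency matrix `C` of the double quiver `Q̄`. -/
def doubleAdj : Matrix (Fin Q.r) (Fin Q.r) ℕ := Matrix.of fun i j =>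
  Q.adjMatrix i j + Q.adjMatrix j i

end FinQuiver

/-- Generators for `k[z]Q̄`: trivial paths, arrows of the double quiver, and
the central variable `z`. -/
inductive QHGen (Q : FinQuiver) : Type
  | vert : Fin Q.r → QHGen Q
  | fwd : Q.Arrow → QHGen Q
  | bwd : Q.Arrow → QHGen Q
  | z : QHGen Q

/-- The mesh element `ρ_i = ∑_{src α = i} α α* - ∑_{tgt α = i} α* α`. -/
noncomputable def qhMesh (k : Type) [Field k] (Q : FinQuiver) (i : Fin Q.r) :
    FreeAlgebra k (QHGen Q) :=
  (∑ e : Q.Arrow, if Q.src e = i then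
      FreeAlgebra.ι k (QHGen.fwd e) * FreeAlgebra.ι k (QHGen.bwd e) else 0)
  - ∑ e : Q.Arrow, if Q.tgt e = i then
      FreeAlgebra.ι k (QHGen.bwd e) * FreeAlgebra.ι k (QHGen.fwd e) else 0

/-- Defining relations of the quiver Heisenberg algebra `ᵛΛ(Q)`:
path-algebra relations for `Q̄`, centrality of `z`, and `ρ_i = v_i z e_i`. -/
inductive QHRel (k : Type) [Field k] (Q : FinQuiver) (v : Fin Q.r → k) :
    FreeAlgebra k (QHGen Q) → FreeAlgebra k (QHGen Q) → Prop
  | vert_idem (i : Fin Q.r) :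
      QHRel k Q v (FreeAlgebra.ι k (QHGen.vert i) * FreeAlgebra.ι k (QHGen.vert i))
        (FreeAlgebra.ι k (QHGen.vert i))
  | vert_orth (i j : Fin Q.r) (h : i ≠ j) :
      QHRel k Q v (FreeAlgebra.ι k (QHGen.vert i) * FreeAlgebra.ι k (QHGen.vert j)) 0
  | vert_sum : QHRel k Q v (∑ i : Fin Q.r, FreeAlgebra.ι k (QHGen.vert i)) 1
  | fwd_left (e : Q.Arrow) :
      QHRel k Q v (FreeAlgebra.ι k (QHGen.vert (Q.src e)) * FreeAlgebra.ι k (QHGen.fwd e))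
        (FreeAlgebra.ι k (QHGen.fwd e))
  | fwd_right (e : Q.Arrow) :
      QHRel k Q v (FreeAlgebra.ι k (QHGen.fwd e) * FreeAlgebra.ι k (QHGen.vert (Q.tgt e)))
        (FreeAlgebra.ι k (QHGen.fwd e))
  | bwd_left (e : Q.Arrow) :
      QHRel k Q v (FreeAlgebra.ι k (QHGen.vert (Q.tgt e)) * FreeAlgebra.ι k (QHGen.bwd e))
        (FreeAlgebra.ι k (QHGen.bwd e))
  | bwd_right (e : Q.Arrow) :
      QHRel k Q v (FreeAlgebra.ι k (QHGen.bwd e) * FreeAlgebra.ι k (QHGen.vert (Q.src e)))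
        (FreeAlgebra.ι k (QHGen.bwd e))
  | central (g : QHGen Q) :
      QHRel k Q v (FreeAlgebra.ι k QHGen.z * FreeAlgebra.ι k g)
        (FreeAlgebra.ι k g * FreeAlgebra.ι k QHGen.z)
  | heisenberg (i : Fin Q.r) :
      QHRel k Q v (qhMesh k Q i)
        (v i • (FreeAlgebra.ι k QHGen.z * FreeAlgebra.ι k (QHGen.vert i)))

/-- The quiver Heisenberg algebra `ᵛΛ(Q)`. -/
abbrev QHAlg (k : Type) [Field k] (Q : FinQuiver) (v : Fin Q.r → k) : Type :=
  RingQuot (QHRel k Q v)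

/-- Image in `ᵛΛ(Q)` of a generator. -/
noncomputable def qhGen (k : Type) [Field k] (Q : FinQuiver) (v : Fin Q.r → k)
    (g : QHGen Q) : QHAlg k Q v :=
  RingQuot.mkAlgHom k (QHRel k Q v) (FreeAlgebra.ι k g)

/-- Degree of a generator: trivial paths 0, arrows 1, `z` 2. -/
def qhWt (Q : FinQuiver) : QHGen Q → ℕ
  | .vert _ => 0
  | .fwd _ => 1
  | .bwd _ => 1
  | .z => 2

/-- The degree-`n` component `ᵛΛ(Q)_n`: span of images of weight-`n` monomials. -/
noncomputable def qhPiece (k : Type) [Field k] (Q : FinQuiver) (v : Fin Q.r → k)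
    (n : ℕ) : Submodule k (QHAlg k Q v) :=
  Submodule.span k
    {x | ∃ l : List (QHGen Q), (l.map (qhWt Q)).sum = n ∧ x = (l.map (qhGen k Q v)).prod}

/-- The subspace `e_i ᵛΛ(Q)_n e_j`. -/
noncomputable def qhCorner (k : Type) [Field k] (Q : FinQuiver) (v : Fin Q.r → k)
    (n : ℕ) (i j : Fin Q.r) : Submodule k (QHAlg k Q v) :=
  (qhPiece k Q v n).map
    ((LinearMap.mulLeft k (qhGen k Q v (QHGen.vert i))).comp
      (LinearMap.mulRight k (qhGen k Q v (QHGen.vert j))))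

/-- The matrix Hilbert series `h_{ᵛΛ}(t)` over `k[[t]]`. -/
noncomputable def qhHilb (k : Type) [Field k] (Q : FinQuiver) (v : Fin Q.r → k) :
    Matrix (Fin Q.r) (Fin Q.r) (PowerSeries k) :=
  Matrix.of fun i j => PowerSeries.mk fun n => (Module.finrank k (qhCorner k Q v n i j) : k)

/-!
Modulo the central variable `z` the algebra `ᵛΛ(Q)` is the preprojective algebra `Π`. Each left
ideal `Π e_j` is generated by one vector `e_j`, and its relations are exactly the mesh relations.
Hence the truncations of `Π e_j` to two consecutive degrees have only scalar endomorphisms: such an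
endomorphism descends to lower degrees and is determined there. A vector annihilated by all arrows
below the highest degree would give a further endomorphism, so it can only occur in the highest
degree. If there is a highest degree, then the total dimensions form a function on the vertices that
is superharmonic but not harmonic, and the Tits form is positive definite. For non-Dynkin `Q`
therefore no nonzero vector of `Π` is annihilated by all arrows, and the mesh sequences
`0 → e_i Π_n → ⨁ e_l Π_{n+1} → e_i Π_{n+2} → 0` are exact; they determine the dimensions of `Π`.

The noncommutative (Fox) derivatives show that the relations between left multiples of the arrows
and of `z` come from the defining relations of `ᵛΛ(Q)`. An element annihilated by `z` is thus a
combination `∑ a u_a` of elements annihilated by `z`, and `z` is regular by induction on the degree.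
So `dim e_i ᵛΛ(Q)_{n+2} e_j = dim e_i Π_{n+2} e_j + dim e_i ᵛΛ(Q)_n e_j`, independently of `v`.
-/

namespace FinQuiver

/-- The arrows of the double quiver `Q̄`: `Sum.inl e` is the arrow `e`, and `Sum.inr e` is the
reverse arrow `e*`. -/
abbrev DArrow (Q : FinQuiver) : Type := Q.Arrow ⊕ Q.Arrow

namespace DArrow

variable {Q : FinQuiver}

/-- The source of an arrow of the double quiver. -/
def src : Q.DArrow → Fin Q.r := Sum.elim Q.src Q.tgt

/-- The target of an arrow of the double quiver. -/
def tgt : Q.DArrow → Fin Q.r := Sum.elim Q.tgt Q.src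

/-- The involution `a ↦ a*` of the arrows of the double quiver. -/
def rev : Q.DArrow → Q.DArrow := Sum.swap

/-- The sign with which `a a*` enters the mesh relation at the source of `a`. -/
def sign (k : Type*) [Ring k] : Q.DArrow → k := Sum.elim (fun _ => 1) (fun _ => -1)

@[simp] lemma rev_rev (a : Q.DArrow) : a.rev.rev = a := Sum.swap_swap a

@[simp] lemma src_rev (a : Q.DArrow) : a.rev.src = a.tgt := by cases a <;> rfl

@[simp] lemma tgt_rev (a : Q.DArrow) : a.rev.tgt = a.src := by cases a <;> rfl

lemma sign_mul_self (k : Type*) [Ring k] (a : Q.DArrow) : a.sign k * a.sign k = 1 := by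
  cases a <;> simp [sign]

lemma sign_ne_zero (k : Type*) [Ring k] [Nontrivial k] (a : Q.DArrow) : a.sign k ≠ 0 :=
  left_ne_zero_of_mul_eq_one (a.sign_mul_self k)

end DArrow

/-- The arrows of the double quiver that start at `i`. -/
abbrev OutArrow (Q : FinQuiver) (i : Fin Q.r) : Type := {a : Q.DArrow // a.src = i}

lemma sum_outArrow {Q : FinQuiver} {M : Type*} [AddCommMonoid M] (i : Fin Q.r)
    (f : Q.DArrow → M) : ∑ a : Q.OutArrow i, f a = ∑ a, if a.src = i then f a else 0 := by
  rw [← Finset.sum_filter]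
  exact (Finset.sum_subtype _ (fun a => by simp) f).symm

section TitsForm

variable {Q : FinQuiver}

lemma Connected.induction (hconn : Q.Connected) {p : Fin Q.r → Prop} {j : Fin Q.r} (hj : p j)
    (h : ∀ a : Q.DArrow, p a.tgt → p a.src) (i : Fin Q.r) : p i := by
  induction hconn j i with
  | refl => exact hj
  | tail _ hbc ih =>
    obtain ⟨e, ⟨rfl, rfl⟩ | ⟨rfl, rfl⟩⟩ := hbc
    · exact h (Sum.inr e) ih
    · exact h (Sum.inl e) ih

/-- The action of the adjacency matrix `C` of the double quiver on functions of the vertices. -/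
def neighborSum {R : Type*} [Semiring R] : (Fin Q.r → R) →ₗ[R] (Fin Q.r → R) where
  toFun f i := ∑ a : Q.OutArrow i, f a.1.tgt
  map_add' f g := by ext i; simp [Finset.sum_add_distrib]
  map_smul' c f := by ext i; simp [Finset.mul_sum]

lemma neighborSum_apply {R : Type*} [Semiring R] (f : Fin Q.r → R) (i : Fin Q.r) :
    neighborSum f i = ∑ a : Q.OutArrow i, f a.1.tgt := rfl

lemma neighborSum_nonneg {D : Fin Q.r → ℝ} (hD : ∀ i, 0 ≤ D i) (i : Fin Q.r) :
    0 ≤ neighborSum D i :=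
  Finset.sum_nonneg fun _ _ => hD _

lemma sum_mul_neighborSum {R : Type*} [Semiring R] (f g : Fin Q.r → R) :
    ∑ i, f i * neighborSum g i = ∑ a : Q.DArrow, f a.src * g a.tgt := by
  simp only [neighborSum_apply, Finset.mul_sum]
  rw [← Fintype.sum_fiberwise DArrow.src]
  refine Finset.sum_congr rfl fun i _ => Finset.sum_congr rfl fun a _ => ?_
  rw [a.2]

lemma two_mul_titsForm_mul (D c : Fin Q.r → ℝ) :
    2 * Q.titsForm (D * c) =
      ∑ i, c i ^ 2 * D i * (2 * D i - neighborSum D i) +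
        ∑ e, D (Q.src e) * D (Q.tgt e) * (c (Q.src e) - c (Q.tgt e)) ^ 2 := by
  simp only [mul_sub (_ * _ : ℝ) (2 * _), Finset.sum_sub_distrib, sum_mul_neighborSum,
    Fintype.sum_sum_type, DArrow.src, DArrow.tgt, Sum.elim_inl, Sum.elim_inr, titsForm,
    Finset.mul_sum, mul_sub, Pi.mul_apply]
  rw [sub_add, ← Finset.sum_add_distrib, ← Finset.sum_sub_distrib]
  congr 1 <;> exact Finset.sum_congr rfl fun i _ => by ring

lemma pos_of_superharmonic (hconn : Q.Connected) {D : Fin Q.r → ℝ} (h0 : ∀ i, 0 ≤ D i)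
    (hD : ∀ i, neighborSum D i ≤ 2 * D i) {j : Fin Q.r} (hj : 0 < D j) (i : Fin Q.r) : 0 < D i := by
  refine hconn.induction (p := fun i => 0 < D i) hj (fun a ha => ?_) i
  have hle : D a.tgt ≤ neighborSum D a.src :=
    Finset.single_le_sum (f := fun b : Q.OutArrow a.src => D b.1.tgt) (fun b _ => h0 _)
      (Finset.mem_univ ⟨a, rfl⟩)
  linarith [hD a.src]

/-- If a positive superharmonic function `D` exists, then the Tits form is the sum of squares of
`two_mul_titsForm_mul`; connectedness makes it definite as soon as one of the vertex terms is. -/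
lemma isDynkin_of_superharmonic (hconn : Q.Connected) {D : Fin Q.r → ℝ} (h0 : ∀ i, 0 ≤ D i)
    (hD : ∀ i, neighborSum D i ≤ 2 * D i) {j : Fin Q.r} (hj : neighborSum D j < 2 * D j) :
    Q.IsDynkin := by
  have hDj : 0 < D j := by linarith [neighborSum_nonneg h0 j]
  have hpos := pos_of_superharmonic hconn h0 hD hDj
  have hvert (c : Fin Q.r → ℝ) (i) : 0 ≤ c i ^ 2 * D i * (2 * D i - neighborSum D i) :=
    mul_nonneg (mul_nonneg (sq_nonneg _) (h0 i)) (sub_nonneg.2 (hD i))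
  have hedge (c : Fin Q.r → ℝ) (e) :
      0 ≤ D (Q.src e) * D (Q.tgt e) * (c (Q.src e) - c (Q.tgt e)) ^ 2 :=
    mul_nonneg (mul_nonneg (h0 _) (h0 _)) (sq_nonneg _)
  intro x hx
  by_contra! hq
  obtain ⟨c, rfl⟩ : ∃ c, x = D * c :=
    ⟨x / D, funext fun i => (mul_div_cancel₀ (x i) (hpos i).ne').symm⟩
  have hsum := two_mul_titsForm_mul D c
  have hv := Finset.sum_nonneg fun i (_ : i ∈ Finset.univ) => hvert c i
  have he := Finset.sum_nonneg fun e (_ : e ∈ Finset.univ) => hedge c e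
  have hcj : c j = 0 := by
    have := (Finset.sum_eq_zero_iff_of_nonneg fun i _ => hvert c i).1 (by linarith) j
      (Finset.mem_univ j)
    simpa [hDj.ne', (sub_pos.2 hj).ne'] using this
  have hcconst (e : Q.Arrow) : c (Q.src e) = c (Q.tgt e) := by
    have := (Finset.sum_eq_zero_iff_of_nonneg fun e _ => hedge c e).1 (by linarith) e
      (Finset.mem_univ e)
    simpa [(hpos _).ne', sub_eq_zero] using this
  have hc0 : ∀ i, c i = 0 := hconn.induction hcj <| by
    rintro (e | e) h
    · exact (hcconst e).trans h
    · exact (hcconst e).symm.trans h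
  exact hx (funext fun i => by simp [hc0 i])

lemma neighborSum_sum_range_add {R : Type*} [CommRing R] {d : ℕ → Fin Q.r → R} (h0 : d 0 = 0) :
    ∀ {N : ℕ}, (∀ m < N, d (m + 2) + d m = neighborSum (d (m + 1))) →
      neighborSum (∑ m ∈ Finset.range N, d (m + 1)) + d 1 + d N =
        2 • ∑ m ∈ Finset.range N, d (m + 1) + d (N + 1)
  | 0, _ => by simp [h0]
  | N + 1, hrec => by
    have ih := neighborSum_sum_range_add h0 fun m hm => hrec m (hm.trans N.lt_succ_self)
    have hN := hrec N N.lt_succ_self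
    simp only [Finset.sum_range_succ, map_add, ← hN]
    linear_combination (exp := 1) ih

/-- The partial sum `∑ m < n, d (m + 1)` is superharmonic, strictly so at `j`. -/
lemma isDynkin_of_recursion (hconn : Q.Connected) {d : ℕ → Fin Q.r → ℝ} (hd : ∀ m i, 0 ≤ d m i)
    (h0 : d 0 = 0) {j : Fin Q.r} (h1 : 0 < d 1 j) {n : ℕ} (hn : d (n + 1) = 0)
    (hrec : ∀ m < n, d (m + 2) + d m = neighborSum (d (m + 1))) : Q.IsDynkin := by
  have key (i) := congrFun (neighborSum_sum_range_add h0 hrec) i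
  simp only [hn, two_smul, Pi.add_apply, Pi.zero_apply, add_zero] at key
  refine isDynkin_of_superharmonic hconn (D := ∑ m ∈ Finset.range n, d (m + 1))
    (fun i => ?_) (fun i => ?_) (j := j) ?_
  · simpa only [Finset.sum_apply] using Finset.sum_nonneg fun m _ => hd (m + 1) i
  · linarith [key i, hd 1 i, hd n i]
  · linarith [key j, hd n j]

end TitsForm

end FinQuiver

section LinearAlgebra

open Module

variable {K M N U : Type*} [DivisionRing K] [AddCommGroup M] [Module K M] [AddCommGroup N]
  [Module K N] [AddCommGroup U] [Module K U]

lemma exists_linearMap_mem_comp_eq (V : Submodule K M) (P : Submodule K N) (T : M →ₗ[K] U)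
    (D : N →ₗ[K] U) (h : ∀ x ∈ V, ∃ y ∈ P, D y = T x) :
    ∃ φ : M →ₗ[K] N, ∀ x ∈ V, φ x ∈ P ∧ D (φ x) = T x := by
  have hT : ∀ x : V, T x ∈ P.map D := fun x => Submodule.mem_map.2 (h x x.2)
  obtain ⟨ψ, hψ⟩ := projective_lifting_property (D.submoduleMap P)
    ((T.domRestrict V).codRestrict _ hT) (D.submoduleMap_surjective P)
  obtain ⟨φ, hφ⟩ := LinearMap.exists_extend (P.subtype ∘ₗ ψ)
  refine ⟨φ, fun x hx => ?_⟩
  have hφx : φ x = ψ ⟨x, hx⟩ := LinearMap.congr_fun hφ ⟨x, hx⟩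
  exact ⟨hφx ▸ (ψ ⟨x, hx⟩).2, hφx ▸ congrArg Subtype.val (LinearMap.congr_fun hψ ⟨x, hx⟩)⟩

lemma finrank_eq_finrank_map_mkQ_add_finrank_inf (V P : Submodule K M) [FiniteDimensional K V] :
    finrank K V = finrank K (V.map P.mkQ) + finrank K (V ⊓ P : Submodule K M) := by
  rw [← LinearMap.finrank_range_add_finrank_ker (P.mkQ.domRestrict V), LinearMap.range_domRestrict,
    LinearMap.ker_domRestrict, Submodule.ker_mkQ, ← Submodule.map_comap_subtype,
    Submodule.finrank_map_subtype_eq]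

end LinearAlgebra

/-- A graded representation of the double quiver of `Q` that is generated by one vector at the
vertex `root` and whose relations are generated by the mesh relations. Such is the representation
`Π e_j` of the preprojective algebra `Π`.

`W n i` is the component at the vertex `i` of degree `n - 1`: the shift makes `W 0` vanish, so that
`exists_of_sum_act_eq_zero` covers the lowest degree. Paths are composed from left to right, as in
`QHRel`, and hence an arrow `a` maps the component at its target to the one at its source. -/
structure MeshRep (k : Type*) [Field k] (Q : FinQuiver) (M : Type*) [AddCommGroup M]
    [Module k M] where
  act : Q.DArrow → M →ₗ[k] M
  W : ℕ → Fin Q.r → Submodule k M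
  root : Fin Q.r
  gen : M
  act_mem : ∀ {n a x}, x ∈ W n a.tgt → act a x ∈ W (n + 1) a.src
  mesh : ∀ {n i x}, x ∈ W n i →
    ∑ a : Q.OutArrow i, a.1.sign k • act a (act a.1.rev x) = 0
  W_zero : ∀ i, W 0 i = ⊥
  W_one_root : W 1 root = Submodule.span k {gen}
  W_one_of_ne : ∀ {i}, i ≠ root → W 1 i = ⊥
  gen_ne_zero : gen ≠ 0
  exists_sum_act : ∀ {n i y}, y ∈ W (n + 2) i →
    ∃ f : Q.OutArrow i → M, (∀ a, f a ∈ W (n + 1) a.1.tgt) ∧ ∑ a, act a.1 (f a) = y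
  exists_of_sum_act_eq_zero : ∀ {n i} {f : Q.OutArrow i → M}, (∀ a, f a ∈ W (n + 1) a.1.tgt) →
    ∑ a, act a.1 (f a) = 0 → ∃ x ∈ W n i, ∀ a, f a = a.1.sign k • act a.1.rev x

namespace MeshRep

open FinQuiver Module

variable {k M : Type*} [Field k] {Q : FinQuiver} [AddCommGroup M] [Module k M]
  (S : MeshRep k Q M)

/-- No nonzero vector of `W n` is annihilated by all arrows. -/
def SocleFree (n : ℕ) : Prop :=
  ∀ i, ∀ x ∈ S.W n i, (∀ a : Q.DArrow, a.tgt = i → S.act a x = 0) → x = 0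

/-- The pair `(f, g)` is an endomorphism of the truncation `W n → W (n + 1)`. -/
structure IsTruncEnd (n : ℕ) (f g : Fin Q.r → M →ₗ[k] M) : Prop where
  map_mem : ∀ {i x}, x ∈ S.W n i → f i x ∈ S.W n i
  map_mem_succ : ∀ {i x}, x ∈ S.W (n + 1) i → g i x ∈ S.W (n + 1) i
  map_act : ∀ {a x}, x ∈ S.W n a.tgt → g a.src (S.act a x) = S.act a (f a.tgt x)

/-- The truncation `W n → W (n + 1)` has no endomorphisms besides the scalars. -/
def Brick (n : ℕ) : Prop :=
  ∀ f g, S.IsTruncEnd n f g →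
    ∃ c : k, (∀ i, ∀ x ∈ S.W n i, f i x = c • x) ∧ ∀ i, ∀ x ∈ S.W (n + 1) i, g i x = c • x

variable {S}

lemma act_mem_of_src {n : ℕ} {i : Fin Q.r} {x : M} {a : Q.DArrow} (ha : a.src = i)
    (hx : x ∈ S.W n a.tgt) : S.act a x ∈ S.W (n + 1) i :=
  ha ▸ S.act_mem hx

lemma act_rev_mem {n : ℕ} {i : Fin Q.r} {x : M} (hx : x ∈ S.W n i) (a : Q.OutArrow i) :
    S.act a.1.rev x ∈ S.W (n + 1) a.1.tgt :=
  act_mem_of_src a.1.src_rev (by rwa [DArrow.tgt_rev, a.2])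

lemma IsTruncEnd.map_act_out {n : ℕ} {f g : Fin Q.r → M →ₗ[k] M} (h : S.IsTruncEnd n f g)
    {i : Fin Q.r} (a : Q.OutArrow i) {x : M} (hx : x ∈ S.W n a.1.tgt) :
    g i (S.act a x) = S.act a (f a.1.tgt x) := by
  obtain ⟨a, rfl⟩ := a
  exact h.map_act hx

/-- Exactness in degree `n` turns the mesh relation satisfied by the vectors `f (a* x)` into a
vector `x'` of degree `n`. -/
lemma IsTruncEnd.exists_act_eq {n : ℕ} {f g : Fin Q.r → M →ₗ[k] M}
    (h : S.IsTruncEnd (n + 1) f g) {i : Fin Q.r} {x : M} (hx : x ∈ S.W n i) :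
    ∃ x' ∈ S.W n i, ∀ a : Q.DArrow, a.tgt = i → S.act a x' = f a.src (S.act a x) := by
  obtain ⟨x', hx', hfx'⟩ := S.exists_of_sum_act_eq_zero (i := i)
    (f := fun a => a.1.sign k • f a.1.tgt (S.act a.1.rev x))
    (fun a => Submodule.smul_mem _ _ (h.map_mem (act_rev_mem hx a))) <| by
      simp only [map_smul, ← h.map_act_out _ (act_rev_mem hx _)]
      simp only [← (g i).map_smul, ← map_sum, S.mesh hx, map_zero]
  refine ⟨x', hx', fun a ha => ?_⟩
  have := smul_right_injective M (a.rev.sign_ne_zero k) (hfx' ⟨a.rev, by simpa using ha⟩)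
  simpa using this.symm

lemma IsTruncEnd.exists_lift {n : ℕ} {f g : Fin Q.r → M →ₗ[k] M}
    (h : S.IsTruncEnd (n + 1) f g) : ∃ e, S.IsTruncEnd n e f := by
  have hlift (i : Fin Q.r) : ∃ φ : M →ₗ[k] M, ∀ x ∈ S.W n i, φ x ∈ S.W n i ∧
      ∀ a : Q.DArrow, a.tgt = i → S.act a (φ x) = f a.src (S.act a x) := by
    obtain ⟨φ, hφ⟩ := exists_linearMap_mem_comp_eq (S.W n i) (S.W n i)
      (LinearMap.pi fun a : {a : Q.DArrow // a.tgt = i} => f a.1.src ∘ₗ S.act a)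
      (LinearMap.pi fun a => S.act a) fun x hx => by
        obtain ⟨x', hx', hax'⟩ := h.exists_act_eq hx
        exact ⟨x', hx', funext fun a => hax' a a.2⟩
    exact ⟨φ, fun x hx => ⟨(hφ x hx).1, fun a ha => congrFun (hφ x hx).2 ⟨a, ha⟩⟩⟩
  choose e he using hlift
  exact ⟨e, fun hx => (he _ _ hx).1, h.map_mem, fun hx => ((he _ _ hx).2 _ rfl).symm⟩

variable (S) in
lemma brick_zero : S.Brick 0 := by
  intro f g h
  have hgen : S.gen ∈ S.W 1 S.root := S.W_one_root ▸ Submodule.mem_span_singleton_self _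
  obtain ⟨c, hc⟩ : ∃ c : k, c • S.gen = g S.root S.gen := by
    rw [← Submodule.mem_span_singleton, ← S.W_one_root]
    exact h.map_mem_succ hgen
  refine ⟨c, fun i x hx => ?_, fun i x hx => ?_⟩
  · rw [S.W_zero, Submodule.mem_bot] at hx
    simp [hx]
  obtain rfl | hi := eq_or_ne i S.root
  · rw [zero_add, S.W_one_root, Submodule.mem_span_singleton] at hx
    obtain ⟨d, rfl⟩ := hx
    rw [map_smul, ← hc, smul_comm]
  · rw [zero_add, S.W_one_of_ne hi, Submodule.mem_bot] at hx
    simp [hx]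

lemma Brick.succ {n : ℕ} (hB : S.Brick n) : S.Brick (n + 1) := by
  intro f g h
  obtain ⟨e, he⟩ := h.exists_lift
  obtain ⟨c, -, hc⟩ := hB e f he
  refine ⟨c, hc, fun i y hy => ?_⟩
  obtain ⟨t, ht, rfl⟩ := S.exists_sum_act hy
  rw [map_sum, Finset.smul_sum]
  refine Finset.sum_congr rfl fun a _ => ?_
  rw [h.map_act_out a (ht a), hc _ _ (ht a), map_smul]

variable (S) in
lemma brick : ∀ n, S.Brick n
  | 0 => S.brick_zero
  | n + 1 => (brick n).succ

/-- A nonzero socle vector `x` of degree `n` yields the endomorphism `(φ(·) x, 0)`, which is not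
scalar if `W (n + 1)` is nonzero. -/
lemma socleFree_of_W_succ_ne_bot {n : ℕ} {l : Fin Q.r} (hl : S.W (n + 1) l ≠ ⊥) :
    S.SocleFree n := by
  intro i x hx hax
  by_contra hx0
  obtain ⟨φ, hφ⟩ := Projective.exists_dual_ne_zero k hx0
  have hend : S.IsTruncEnd n (Pi.single i (φ.smulRight x)) 0 := by
    refine ⟨fun {l y} _ => ?_, fun _ => by simp, fun {a y} _ => ?_⟩
    · obtain rfl | hl := eq_or_ne l i
      · simpa using Submodule.smul_mem _ _ hx
      · simp [hl]
    · obtain ha | ha := eq_or_ne a.tgt i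
      · subst ha
        simp [hax a rfl]
      · simp [ha]
  obtain ⟨c, hcf, hcg⟩ := S.brick n _ _ hend
  have hc : c = φ x := by
    simpa [hx0] using (hcf i x hx).symm
  refine hl ((Submodule.eq_bot_iff _).2 fun y hy => ?_)
  simpa [hc, hφ] using (hcg l y hy).symm

variable (S)

/-- The map `⨁ₐ W (n + 1) a.tgt → W (n + 2) i`. -/
def sumAct (n : ℕ) (i : Fin Q.r) : (∀ a : Q.OutArrow i, S.W (n + 1) a.1.tgt) →ₗ[k] M :=
  ∑ a : Q.OutArrow i, S.act a.1 ∘ₗ (S.W (n + 1) a.1.tgt).subtype ∘ₗ LinearMap.proj a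

lemma sumAct_apply (n : ℕ) (i : Fin Q.r) (f : ∀ a : Q.OutArrow i, S.W (n + 1) a.1.tgt) :
    S.sumAct n i f = ∑ a, S.act a.1 (f a) := by
  simp [sumAct]

lemma range_sumAct (n : ℕ) (i : Fin Q.r) : LinearMap.range (S.sumAct n i) = S.W (n + 2) i := by
  refine le_antisymm ?_ fun y hy => ?_
  · rintro _ ⟨f, rfl⟩
    rw [sumAct_apply]
    exact Submodule.sum_mem _ fun a _ => act_mem_of_src a.2 (f a).2
  · obtain ⟨f, hf, rfl⟩ := S.exists_sum_act hy
    exact ⟨fun a => ⟨f a, hf a⟩, S.sumAct_apply n i _⟩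

/-- The map `W n i → ⨁ₐ W (n + 1) a.tgt` of the mesh at `i`. -/
def meshMap (n : ℕ) (i : Fin Q.r) : S.W n i →ₗ[k] ∀ a : Q.OutArrow i, S.W (n + 1) a.1.tgt :=
  LinearMap.pi fun a => a.1.sign k • (S.act a.1.rev).restrict fun _ hx => act_rev_mem hx a

lemma coe_meshMap_apply {n : ℕ} {i : Fin Q.r} (x : S.W n i) (a : Q.OutArrow i) :
    (S.meshMap n i x a : M) = a.1.sign k • S.act a.1.rev x := rfl

lemma ker_sumAct (n : ℕ) (i : Fin Q.r) :
    LinearMap.ker (S.sumAct n i) = LinearMap.range (S.meshMap n i) := by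
  refine le_antisymm (fun f hf => ?_) ?_
  · rw [LinearMap.mem_ker, sumAct_apply] at hf
    obtain ⟨x, hx, hfx⟩ := S.exists_of_sum_act_eq_zero (fun a => (f a).2) hf
    exact ⟨⟨x, hx⟩, funext fun a => Subtype.ext (hfx a).symm⟩
  · rintro _ ⟨x, rfl⟩
    simp only [LinearMap.mem_ker, sumAct_apply, coe_meshMap_apply, map_smul, S.mesh x.2]

variable {S}

lemma SocleFree.injective_meshMap {n : ℕ} (hS : S.SocleFree n) (i : Fin Q.r) :
    Function.Injective (S.meshMap n i) := by
  refine (injective_iff_map_eq_zero _).2 fun x hx => Subtype.ext (hS i x x.2 fun a ha => ?_)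
  have := S.coe_meshMap_apply x ⟨a.rev, by simpa using ha⟩
  simpa [hx, DArrow.sign_ne_zero] using this.symm

variable (S)

instance finite_W : ∀ n i, Module.Finite k (S.W n i)
  | 0, i => S.W_zero i ▸ inferInstance
  | 1, i => by
    obtain rfl | hi := eq_or_ne i S.root
    · exact S.W_one_root ▸ inferInstance
    · exact S.W_one_of_ne hi ▸ inferInstance
  | n + 2, i => by
    have := finite_W (n + 1)
    rw [← S.range_sumAct]
    infer_instance

lemma finrank_W_zero (i : Fin Q.r) : finrank k (S.W 0 i) = 0 := by
  rw [S.W_zero, finrank_bot]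

lemma finrank_W_one (i : Fin Q.r) : finrank k (S.W 1 i) = if i = S.root then 1 else 0 := by
  split_ifs with hi
  · rw [hi, S.W_one_root, finrank_span_singleton S.gen_ne_zero]
  · rw [S.W_one_of_ne hi, finrank_bot]

variable {S}

lemma SocleFree.finrank_add {n : ℕ} (hS : S.SocleFree n) (i : Fin Q.r) :
    finrank k (S.W (n + 2) i) + finrank k (S.W n i) =
      neighborSum (fun l => finrank k (S.W (n + 1) l)) i := by
  rw [← S.range_sumAct, ← LinearMap.finrank_range_of_inj (hS.injective_meshMap i), ← S.ker_sumAct,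
    LinearMap.finrank_range_add_finrank_ker, finrank_pi_fintype, neighborSum_apply]

variable (S)

/-- If `W (n + 1) = 0`, the dimensions of the lower components satisfy the recursion that makes `Q`
Dynkin. -/
lemma socleFree (hconn : Q.Connected) (hnd : ¬ Q.IsDynkin) (n : ℕ) : S.SocleFree n := by
  induction n using Nat.strong_induction_on with
  | _ n ih =>
    by_contra hn
    have hW (i) : S.W (n + 1) i = ⊥ := by_contra fun h => hn (socleFree_of_W_succ_ne_bot h)
    refine hnd (isDynkin_of_recursion hconn (d := fun m i => finrank k (S.W m i)) (j := S.root)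
      (n := n) (fun m i => Nat.cast_nonneg _) ?_ ?_ ?_ fun m hm => ?_)
    · ext i
      simp [S.finrank_W_zero]
    · simp [S.finrank_W_one]
    · ext i
      simp [hW]
    · ext i
      have := (ih m hm).finrank_add i
      rw [neighborSum_apply] at this ⊢
      simpa using congrArg (Nat.cast (R := ℝ)) this

lemma finrank_W_eq {k' M' : Type*} [Field k'] [AddCommGroup M'] [Module k' M']
    (T : MeshRep k' Q M') (hST : S.root = T.root) (hconn : Q.Connected) (hnd : ¬ Q.IsDynkin)
    (n : ℕ) : ∀ i, finrank k (S.W n i) = finrank k' (T.W n i) := by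
  induction n using Nat.twoStepInduction with
  | zero => simp [finrank_W_zero]
  | one => simp [finrank_W_one, hST]
  | more n ih₀ ih₁ =>
    intro i
    have hS := (S.socleFree hconn hnd n).finrank_add i
    have hT := (T.socleFree hconn hnd n).finrank_add i
    simp only [ih₀, ih₁] at hS
    omega

end MeshRep

/-- The generator of `ᵛΛ(Q)` given by an arrow of the double quiver. -/
def QHGen.arr {Q : FinQuiver} : Q.DArrow → QHGen Q := Sum.elim QHGen.fwd QHGen.bwd

/-- The elements `f g` of a `k`-algebra satisfy the defining relations of `ᵛΛ(Q)`, with the two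
kinds of arrows treated uniformly. -/
structure IsQHRep {k : Type} [Field k] {Q : FinQuiver} (v : Fin Q.r → k) {B : Type*} [Ring B]
    [Algebra k B] (f : QHGen Q → B) : Prop where
  vert_mul_vert : ∀ i l, f (.vert i) * f (.vert l) = if i = l then f (.vert l) else 0
  vert_sum : ∑ i, f (.vert i) = 1
  src_mul : ∀ a : Q.DArrow, f (.vert a.src) * f (.arr a) = f (.arr a)
  mul_tgt : ∀ a : Q.DArrow, f (.arr a) * f (.vert a.tgt) = f (.arr a)
  central : ∀ g, f .z * f g = f g * f .z
  heisenberg : ∀ i, ∑ a : Q.OutArrow i, a.1.sign k • (f (.arr a) * f (.arr a.1.rev)) =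
    v i • (f .z * f (.vert i))

namespace IsQHRep

open FinQuiver

variable {k : Type} [Field k] {Q : FinQuiver} {v : Fin Q.r → k} {B : Type*} [Ring B]
  [Algebra k B] {f : QHGen Q → B}

lemma vert_mul_arr (hf : IsQHRep v f) (i : Fin Q.r) (a : Q.DArrow) :
    f (.vert i) * f (.arr a) = if a.src = i then f (.arr a) else 0 := by
  rw [← hf.src_mul a, ← mul_assoc, hf.vert_mul_vert]
  simp only [eq_comm, ite_mul, zero_mul]

lemma arr_mul_vert (hf : IsQHRep v f) (i : Fin Q.r) (a : Q.DArrow) :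
    f (.arr a) * f (.vert i) = if a.tgt = i then f (.arr a) else 0 := by
  rw [← hf.mul_tgt a, mul_assoc, hf.vert_mul_vert]
  split_ifs with h
  · rw [h]
  · rw [mul_zero]

lemma lift_mesh (f : QHGen Q → B) (i : Fin Q.r) :
    FreeAlgebra.lift k f (qhMesh k Q i) =
      ∑ a : Q.OutArrow i, a.1.sign k • (f (.arr a) * f (.arr a.1.rev)) := by
  rw [sum_outArrow i fun a => a.sign k • (f (.arr a) * f (.arr a.rev)), Fintype.sum_sum_type]
  simp [qhMesh, sub_eq_add_neg, apply_ite, DArrow.src, DArrow.sign, DArrow.rev, QHGen.arr,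
    ← Finset.sum_neg_distrib]

/-- The homomorphism from `ᵛΛ(Q)` given by elements that satisfy its relations. -/
noncomputable def lift (hf : IsQHRep v f) : QHAlg k Q v →ₐ[k] B :=
  RingQuot.liftAlgHom k ⟨FreeAlgebra.lift k f, fun _ _ h => by
    cases h with
    | vert_idem i => simp [hf.vert_mul_vert]
    | vert_orth i l h => simp [hf.vert_mul_vert, h]
    | vert_sum => simp [hf.vert_sum]
    | fwd_left e => simpa [DArrow.src, QHGen.arr] using hf.src_mul (Sum.inl e)
    | fwd_right e => simpa [DArrow.tgt, QHGen.arr] using hf.mul_tgt (Sum.inl e)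
    | bwd_left e => simpa [DArrow.src, QHGen.arr] using hf.src_mul (Sum.inr e)
    | bwd_right e => simpa [DArrow.tgt, QHGen.arr] using hf.mul_tgt (Sum.inr e)
    | central g => simpa using hf.central g
    | heisenberg i => simp [lift_mesh, hf.heisenberg]⟩

@[simp]
lemma lift_qhGen (hf : IsQHRep v f) (g : QHGen Q) : hf.lift (qhGen k Q v g) = f g := by
  rw [lift, qhGen, RingQuot.liftAlgHom_mkAlgHom_apply, FreeAlgebra.lift_ι_apply]

end IsQHRep

open FinQuiver in
lemma isQHRep_qhGen (k : Type) [Field k] (Q : FinQuiver) (v : Fin Q.r → k) :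
    IsQHRep v (qhGen k Q v) := by
  have h {x y} (hxy : QHRel k Q v x y) := RingQuot.mkAlgHom_rel k hxy
  refine ⟨fun i l => ?_, ?_, ?_, ?_, fun g => ?_, fun i => ?_⟩
  · split_ifs with hil
    · subst hil
      simpa [qhGen] using h (.vert_idem i)
    · simpa [qhGen] using h (.vert_orth i l hil)
  · simpa [qhGen] using h .vert_sum
  · rintro (e | e)
    · simpa [qhGen, DArrow.src, QHGen.arr] using h (.fwd_left e)
    · simpa [qhGen, DArrow.src, QHGen.arr] using h (.bwd_left e)
  · rintro (e | e)
    · simpa [qhGen, DArrow.tgt, QHGen.arr] using h (.fwd_right e)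
    · simpa [qhGen, DArrow.tgt, QHGen.arr] using h (.bwd_right e)
  · simpa [qhGen] using h (.central g)
  · have hlift : FreeAlgebra.lift k (qhGen k Q v) = RingQuot.mkAlgHom k (QHRel k Q v) := by
      ext g
      simp [qhGen]
    simpa [hlift, qhGen, h (.heisenberg i)] using (IsQHRep.lift_mesh (k := k) (qhGen k Q v) i).symm

namespace QHAlg

open FinQuiver Polynomial

variable {k : Type} [Field k] {Q : FinQuiver} {v : Fin Q.r → k}

local notation "𝐞[" i "]" => qhGen k Q v (QHGen.vert i)
local notation "𝐚[" a "]" => qhGen k Q v (QHGen.arr a)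
local notation "𝐳" => qhGen k Q v QHGen.z

lemma adjoin_range_qhGen : Algebra.adjoin k (Set.range (qhGen k Q v)) = ⊤ := by
  have hrange : Set.range (qhGen k Q v) =
      RingQuot.mkAlgHom k (QHRel k Q v) '' Set.range (FreeAlgebra.ι k) :=
    Set.range_comp _ _
  rw [hrange, ← AlgHom.map_adjoin, FreeAlgebra.adjoin_range_ι, Algebra.map_top,
    AlgHom.range_eq_top]
  exact RingQuot.mkAlgHom_surjective k _

lemma span_list_prod :
    Submodule.span k (Set.range fun l : List (QHGen Q) => (l.map (qhGen k Q v)).prod) = ⊤ := by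
  have hmonoid : (Submonoid.closure (Set.range (qhGen k Q v)) : Set (QHAlg k Q v)) =
      Set.range fun l : List (QHGen Q) => (l.map (qhGen k Q v)).prod := by
    rw [← FreeMonoid.mrange_lift, MonoidHom.coe_mrange]
    exact congrArg Set.range (funext fun l => FreeMonoid.lift_apply _ l)
  rw [← hmonoid, ← Algebra.adjoin_eq_span, adjoin_range_qhGen, Algebra.top_toSubmodule]

lemma induction_left {p : QHAlg k Q v → Prop} (one : p 1) (add : ∀ x y, p x → p y → p (x + y))
    (smul : ∀ (c : k) x, p x → p (c • x)) (qhGen_mul : ∀ g x, p x → p (qhGen k Q v g * x))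
    (x : QHAlg k Q v) : p x := by
  have hx : x ∈ Submodule.span k
      (Set.range fun l : List (QHGen Q) => (l.map (qhGen k Q v)).prod) := by
    rw [span_list_prod]
    exact Submodule.mem_top
  induction hx using Submodule.span_induction with
  | mem x hx =>
    obtain ⟨l, rfl⟩ := hx
    induction l with
    | nil => exact one
    | cons g l ih => simpa only [List.map_cons, List.prod_cons] using qhGen_mul g _ ih
  | zero => simpa using smul 0 1 one
  | add x y _ _ hx hy => exact add x y hx hy
  | smul c x _ hx => exact smul c x hx

lemma z_mul_comm (x : QHAlg k Q v) : 𝐳 * x = x * 𝐳 := by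
  induction x using induction_left with
  | one => simp
  | add x y hx hy => rw [mul_add, add_mul, hx, hy]
  | smul c x hx => rw [mul_smul_comm, smul_mul_assoc, hx]
  | qhGen_mul g x hx => rw [← mul_assoc, (isQHRep_qhGen k Q v).central, mul_assoc, hx, mul_assoc]

lemma mul_z_mul (x y : QHAlg k Q v) : x * (𝐳 * y) = 𝐳 * (x * y) := by
  rw [← mul_assoc, ← z_mul_comm, mul_assoc]

lemma vert_mul_vert_self (i : Fin Q.r) : 𝐞[i] * 𝐞[i] = 𝐞[i] := by
  rw [(isQHRep_qhGen k Q v).vert_mul_vert, if_pos rfl]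

section Grading

@[simp] lemma qhWt_arr (a : Q.DArrow) : qhWt Q (.arr a) = 1 := by cases a <;> rfl

lemma isQHRep_monomial : IsQHRep v fun g : QHGen Q => monomial (qhWt Q g) (qhGen k Q v g) := by
  have h := isQHRep_qhGen k Q v
  refine ⟨fun i l => ?_, ?_, fun a => ?_, fun a => ?_, fun g => ?_, fun i => ?_⟩
  · rw [monomial_mul_monomial, h.vert_mul_vert]
    split_ifs <;> simp [qhWt]
  · simp only [qhWt, monomial_zero_left, ← map_sum, h.vert_sum, map_one]
  · rw [monomial_mul_monomial, h.src_mul, qhWt, zero_add]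
  · rw [monomial_mul_monomial, h.mul_tgt, qhWt, add_zero]
  · rw [monomial_mul_monomial, monomial_mul_monomial, h.central, add_comm]
  · simp only [monomial_mul_monomial, qhWt_arr, smul_monomial, ← map_sum, h.heisenberg]
    rfl

/-- The grading of `ᵛΛ(Q)` as a coaction: an element of degree `n` is multiplied by `X ^ n`. -/
noncomputable def grading : QHAlg k Q v →ₐ[k] (QHAlg k Q v)[X] := isQHRep_monomial.lift

lemma grading_qhGen (g : QHGen Q) :
    grading (qhGen k Q v g) = monomial (qhWt Q g) (qhGen k Q v g) :=
  isQHRep_monomial.lift_qhGen g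

lemma grading_list_prod (l : List (QHGen Q)) :
    grading (l.map (qhGen k Q v)).prod =
      monomial (l.map (qhWt Q)).sum (l.map (qhGen k Q v)).prod := by
  induction l with
  | nil => simp
  | cons g l ih => simp [ih, grading_qhGen, monomial_mul_monomial]

lemma eval_one_grading (x : QHAlg k Q v) : (grading x).eval 1 = x := by
  induction x using induction_left with
  | one => simp
  | add x y hx hy => simp [hx, hy]
  | smul c x hx => simp [hx]
  | qhGen_mul g x hx =>
    rw [map_mul, grading_qhGen, ← C_mul_X_pow_eq_monomial, mul_assoc, eval_C_mul, X_pow_mul,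
      eval_mul_X_pow, one_pow, mul_one, hx]

/-- The projection onto the component of degree `n - 1`; it vanishes for `n = 0`, in accordance
with the indexing of `MeshRep`. -/
noncomputable def proj (n : ℕ) : QHAlg k Q v →ₗ[k] QHAlg k Q v :=
  (lcoeff (QHAlg k Q v) n).restrictScalars k ∘ₗ LinearMap.mulLeft k X ∘ₗ grading.toLinearMap

lemma proj_apply (n : ℕ) (x : QHAlg k Q v) : proj n x = (X * grading x).coeff n := rfl

lemma proj_zero (x : QHAlg k Q v) : proj 0 x = 0 := coeff_X_mul_zero _

lemma proj_list_prod (n : ℕ) (l : List (QHGen Q)) :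
    proj n (l.map (qhGen k Q v)).prod =
      if (l.map (qhWt Q)).sum + 1 = n then (l.map (qhGen k Q v)).prod else 0 := by
  rw [proj_apply, grading_list_prod, X_mul_monomial, coeff_monomial]

lemma proj_proj (n : ℕ) (x : QHAlg k Q v) : proj n (proj n x) = proj n x := by
  refine LinearMap.congr_fun (f := proj n ∘ₗ proj n)
    (LinearMap.ext_on_range span_list_prod fun l => ?_) x
  rw [LinearMap.comp_apply, proj_list_prod]
  split_ifs with h
  · rw [proj_list_prod, if_pos h]
  · exact map_zero _

lemma range_proj_succ (n : ℕ) : LinearMap.range (proj (v := v) (n + 1)) = qhPiece k Q v n := by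
  refine le_antisymm ?_ (Submodule.span_le.2 ?_)
  · rw [LinearMap.range_eq_map, ← span_list_prod, Submodule.map_span_le]
    rintro _ ⟨l, rfl⟩
    rw [proj_list_prod]
    split_ifs with h
    · exact Submodule.subset_span ⟨l, Nat.succ_injective h, rfl⟩
    · exact zero_mem _
  · rintro _ ⟨l, rfl, rfl⟩
    exact ⟨(l.map (qhGen k Q v)).prod, by rw [proj_list_prod, if_pos rfl]⟩

lemma mem_of_forall_proj_mem {N : Submodule k (QHAlg k Q v)} {x : QHAlg k Q v}
    (h : ∀ n, proj n x ∈ N) : x ∈ N := by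
  rw [← eval_one_grading x, eval_eq_sum, Polynomial.sum]
  refine Submodule.sum_mem _ fun n _ => ?_
  simpa [proj_apply] using h (n + 1)

lemma proj_qhGen_mul (n : ℕ) (g : QHGen Q) (x : QHAlg k Q v) :
    proj (n + qhWt Q g) (qhGen k Q v g * x) = qhGen k Q v g * proj n x := by
  rw [proj_apply, map_mul, grading_qhGen, ← mul_assoc, X_mul, mul_assoc, coeff_monomial_mul,
    proj_apply]

lemma proj_one_z_mul (x : QHAlg k Q v) : proj 1 (𝐳 * x) = 0 := by
  rw [proj_apply, map_mul, grading_qhGen, coeff_X_mul, mul_coeff_zero,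
    coeff_monomial_of_ne _ (by simp [qhWt]), zero_mul]

lemma proj_mul_vert (n : ℕ) (i : Fin Q.r) (x : QHAlg k Q v) :
    proj n (x * 𝐞[i]) = proj n x * 𝐞[i] := by
  rw [proj_apply, map_mul, grading_qhGen, qhWt, monomial_zero_left, ← mul_assoc, coeff_mul_C,
    proj_apply]

end Grading

section Corner

/-- The projection onto the component of `e_i ᵛΛ(Q) e_j` of degree `n - 1`. -/
noncomputable def cornerProj (i j : Fin Q.r) (n : ℕ) : QHAlg k Q v →ₗ[k] QHAlg k Q v :=
  (LinearMap.mulLeft k 𝐞[i] ∘ₗ LinearMap.mulRight k 𝐞[j]) ∘ₗ proj n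

/-- The component of `e_i ᵛΛ(Q) e_j` of degree `n - 1`. -/
noncomputable def corner (i j : Fin Q.r) (n : ℕ) : Submodule k (QHAlg k Q v) :=
  LinearMap.range (cornerProj i j n)

variable {i j : Fin Q.r}

lemma cornerProj_apply (n : ℕ) (x : QHAlg k Q v) :
    cornerProj i j n x = 𝐞[i] * (proj n x * 𝐞[j]) := rfl

lemma qhCorner_eq_corner (n : ℕ) : qhCorner k Q v n i j = corner i j (n + 1) := by
  rw [corner, cornerProj, LinearMap.range_comp, range_proj_succ, qhCorner]

lemma cornerProj_zero (x : QHAlg k Q v) : cornerProj i j 0 x = 0 := by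
  simp [cornerProj_apply, proj_zero]

lemma cornerProj_mem_corner (n : ℕ) (x : QHAlg k Q v) : cornerProj i j n x ∈ corner i j n :=
  LinearMap.mem_range_self _ x

lemma vert_mul_cornerProj (n : ℕ) (x : QHAlg k Q v) :
    𝐞[i] * cornerProj i j n x = cornerProj i j n x := by
  rw [cornerProj_apply, ← mul_assoc, vert_mul_vert_self]

lemma cornerProj_vert_mul (l : Fin Q.r) (n : ℕ) (x : QHAlg k Q v) :
    cornerProj i j n (𝐞[l] * x) = if i = l then cornerProj i j n x else 0 := by
  rw [cornerProj_apply, show proj n (𝐞[l] * x) = 𝐞[l] * proj n x from proj_qhGen_mul n (.vert l) x,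
    mul_assoc, ← mul_assoc, (isQHRep_qhGen k Q v).vert_mul_vert]
  split_ifs with h
  · rw [← h, cornerProj_apply]
  · rw [zero_mul]

lemma cornerProj_cornerProj (n : ℕ) (x : QHAlg k Q v) :
    cornerProj i j n (cornerProj i j n x) = cornerProj i j n x := by
  rw [cornerProj_apply n x, cornerProj_vert_mul, if_pos rfl, cornerProj_apply, proj_mul_vert,
    proj_proj, mul_assoc (proj n x), vert_mul_vert_self]

lemma mem_corner_iff {n : ℕ} {x : QHAlg k Q v} : x ∈ corner i j n ↔ cornerProj i j n x = x :=
  ⟨fun ⟨y, hy⟩ => hy ▸ cornerProj_cornerProj n y, fun h => ⟨x, h⟩⟩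

lemma vert_mul_of_mem_corner {n : ℕ} {x : QHAlg k Q v} (hx : x ∈ corner i j n) :
    𝐞[i] * x = x := by
  rw [← mem_corner_iff.1 hx, vert_mul_cornerProj]

lemma corner_zero : corner (v := v) i j 0 = ⊥ :=
  (Submodule.eq_bot_iff _).2 fun _ ⟨x, hx⟩ => hx ▸ cornerProj_zero x

lemma cornerProj_arr_mul (n : ℕ) (a : Q.DArrow) (x : QHAlg k Q v) :
    cornerProj i j (n + 1) (𝐚[a] * x) =
      if a.src = i then 𝐚[a] * cornerProj a.tgt j n x else 0 := by
  have hproj : proj (n + 1) (𝐚[a] * x) = 𝐚[a] * proj n x := by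
    simpa using proj_qhGen_mul n (.arr a) x
  rw [cornerProj_apply, hproj, mul_assoc, ← mul_assoc, (isQHRep_qhGen k Q v).vert_mul_arr]
  split_ifs
  · rw [cornerProj_apply, ← mul_assoc 𝐚[a] 𝐞[a.tgt], (isQHRep_qhGen k Q v).mul_tgt]
  · rw [zero_mul]

lemma cornerProj_z_mul (n : ℕ) (x : QHAlg k Q v) :
    cornerProj i j (n + 2) (𝐳 * x) = 𝐳 * cornerProj i j n x := by
  rw [cornerProj_apply, show proj (n + 2) (𝐳 * x) = 𝐳 * proj n x from proj_qhGen_mul n .z x,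
    cornerProj_apply, mul_assoc, mul_z_mul]

lemma cornerProj_one_z_mul (x : QHAlg k Q v) : cornerProj i j 1 (𝐳 * x) = 0 := by
  simp [cornerProj_apply, proj_one_z_mul]

lemma mem_of_forall_cornerProj_mem {N : Submodule k (QHAlg k Q v)} {x : QHAlg k Q v}
    (h : ∀ i j n, cornerProj i j n x ∈ N) : x ∈ N := by
  refine mem_of_forall_proj_mem fun n => ?_
  have hsum : proj n x = ∑ i, ∑ j, cornerProj i j n x := by
    simp only [cornerProj_apply, ← Finset.mul_sum, ← Finset.sum_mul, (isQHRep_qhGen k Q v).vert_sum,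
      one_mul, mul_one]
  rw [hsum]
  exact Submodule.sum_mem _ fun i _ => Submodule.sum_mem _ fun j _ => h i j n

end Corner

lemma exists_eq_sum_vert_add (x : QHAlg k Q v) :
    ∃ (c : Fin Q.r → k) (y : Q.DArrow → QHAlg k Q v) (u : QHAlg k Q v),
      x = ∑ i, c i • 𝐞[i] + (∑ a, 𝐚[a] * y a + 𝐳 * u) := by
  classical
  have h := isQHRep_qhGen k Q v
  induction x using induction_left with
  | one => exact ⟨1, 0, 0, by simp [h.vert_sum]⟩
  | add x x' hx hx' =>
    obtain ⟨c, y, u, rfl⟩ := hx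
    obtain ⟨c', y', u', rfl⟩ := hx'
    refine ⟨c + c', y + y', u + u', ?_⟩
    simp only [Pi.add_apply, add_smul, mul_add, Finset.sum_add_distrib]
    abel
  | smul s x hx =>
    obtain ⟨c, y, u, rfl⟩ := hx
    exact ⟨s • c, s • y, s • u, by simp [Finset.smul_sum, mul_smul]⟩
  | qhGen_mul g x hx =>
    have harr (a : Q.DArrow) : ∃ (c : Fin Q.r → k) (y : Q.DArrow → QHAlg k Q v)
        (u : QHAlg k Q v), 𝐚[a] * x = ∑ i, c i • 𝐞[i] + (∑ b, 𝐚[b] * y b + 𝐳 * u) :=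
      ⟨0, Pi.single a x, 0, by simp [Pi.single_apply]⟩
    cases g with
    | vert i =>
      obtain ⟨c, y, u, rfl⟩ := hx
      refine ⟨Pi.single i (c i), fun a => if a.src = i then y a else 0, 𝐞[i] * u, ?_⟩
      simp only [mul_add, Finset.mul_sum, ← mul_assoc, mul_smul_comm, h.vert_mul_vert,
        h.vert_mul_arr, h.central]
      simp [Pi.single_apply]
    | fwd e => exact harr (Sum.inl e)
    | bwd e => exact harr (Sum.inr e)
    | z => exact ⟨0, 0, x, by simp⟩

lemma exists_cornerProj_eq (x : QHAlg k Q v) :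
    ∃ (y : Q.DArrow → QHAlg k Q v) (u : QHAlg k Q v), ∀ i j n, cornerProj i j (n + 2) x =
      ∑ a : Q.OutArrow i, 𝐚[a.1] * cornerProj a.1.tgt j (n + 1) (y a) + 𝐳 * cornerProj i j n u := by
  obtain ⟨c, y, u, rfl⟩ := exists_eq_sum_vert_add x
  refine ⟨y, u, fun i j n => ?_⟩
  have hvert (l : Fin Q.r) : cornerProj (v := v) i j (n + 2) 𝐞[l] = 0 := by
    simp [cornerProj_apply, proj_apply, grading_qhGen, qhWt]
  rw [sum_outArrow i fun a => 𝐚[a] * cornerProj a.tgt j (n + 1) (y a)]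
  simp only [map_add, map_sum, map_smul, hvert, smul_zero, Finset.sum_const_zero, zero_add,
    cornerProj_arr_mul, cornerProj_z_mul]

section Syzygies

variable (v) in
/-- The relations `z (a w) = a (z w)` and `∑ a, ± a (a* x) = z (∑ i, v i e_i x)` between left
multiples `a y_a` and `z u`, as a map whose values are the tuples `((y_a), u)`. -/
noncomputable def relMap : QHAlg k Q v × (Q.DArrow → QHAlg k Q v) →ₗ[k]
    (Q.DArrow → QHAlg k Q v) × QHAlg k Q v where
  toFun p := (fun a => 𝐳 * p.2 a - a.sign k • (𝐚[a.rev] * p.1),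
    (∑ i, v i • 𝐞[i]) * p.1 - ∑ a, 𝐚[a] * p.2 a)
  map_add' p q := by
    refine Prod.ext (funext fun a => ?_) ?_
    · simp [mul_add]; abel
    · simp [mul_add, Finset.sum_add_distrib]; abel
  map_smul' c p := by
    refine Prod.ext (funext fun a => ?_) ?_
    · simp [smul_sub, smul_comm c]
    · simp [smul_sub, Finset.smul_sum]

variable (v) in
/-- The left ideal of `ᵛΛ(Q)` generated by the arrows and `z`, presented by `relMap`. -/
abbrev Pres : Type :=
  ((Q.DArrow → QHAlg k Q v) × QHAlg k Q v) ⧸ LinearMap.range (relMap v)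

namespace Pres

open Classical in
/-- The formal left multiple `a * x` in `Pres v`. -/
noncomputable def arrIncl (a : Q.DArrow) : QHAlg k Q v →ₗ[k] Pres v :=
  Submodule.mkQ _ ∘ₗ LinearMap.inl k _ _ ∘ₗ LinearMap.single k (fun _ => QHAlg k Q v) a

/-- The formal left multiple `z * x` in `Pres v`. -/
noncomputable def zIncl : QHAlg k Q v →ₗ[k] Pres v :=
  Submodule.mkQ _ ∘ₗ LinearMap.inr k _ _

lemma mk_eq (y : Q.DArrow → QHAlg k Q v) (u : QHAlg k Q v) :
    (Submodule.Quotient.mk (y, u) : Pres v) = ∑ a, arrIncl a (y a) + zIncl u := by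
  classical
  have hyu : (y, u) = ∑ a, LinearMap.inl k _ _ (LinearMap.single k (fun _ => QHAlg k Q v) a (y a)) +
      LinearMap.inr k (Q.DArrow → QHAlg k Q v) _ u := by
    refine Prod.ext (funext fun a => ?_) ?_ <;>
      simp [Prod.fst_sum, Prod.snd_sum, Pi.single_apply, -Fintype.sum_sum_type]
  rw [← Submodule.mkQ_apply, hyu, map_add, map_sum]
  rfl

lemma hom_ext {N : Type*} [AddCommGroup N] [Module k N] {f g : Pres v →ₗ[k] N}
    (harr : ∀ a x, f (arrIncl a x) = g (arrIncl a x)) (hz : ∀ x, f (zIncl x) = g (zIncl x)) :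
    f = g := by
  refine Submodule.linearMap_qext _ (LinearMap.ext fun ⟨y, u⟩ => ?_)
  simp only [LinearMap.comp_apply, Submodule.mkQ_apply, mk_eq, map_add, map_sum, harr, hz]

lemma sum_arrIncl_add_zIncl_relMap (p : QHAlg k Q v × (Q.DArrow → QHAlg k Q v)) :
    ∑ a, arrIncl a ((relMap v p).1 a) + zIncl (relMap v p).2 = 0 := by
  rw [← mk_eq, Submodule.Quotient.mk_eq_zero]
  exact LinearMap.mem_range_self _ p

lemma arrIncl_z_mul (a : Q.DArrow) (w : QHAlg k Q v) :
    arrIncl a (𝐳 * w) = zIncl (𝐚[a] * w) := by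
  classical
  simpa [relMap, Pi.single_apply, apply_ite, add_neg_eq_zero, -Fintype.sum_sum_type] using
    sum_arrIncl_add_zIncl_relMap (v := v) (0, Pi.single a w)

lemma sum_sign_smul_arrIncl (i : Fin Q.r) (x : QHAlg k Q v) :
    ∑ a : Q.OutArrow i, a.1.sign k • arrIncl a.1 (𝐚[a.1.rev] * x) = v i • zIncl (𝐞[i] * x) := by
  have h := isQHRep_qhGen k Q v
  have hx := sum_arrIncl_add_zIncl_relMap (v := v) (𝐞[i] * x, 0)
  rw [sum_outArrow i fun a => a.sign k • arrIncl a (𝐚[a.rev] * x)]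
  simp only [relMap, LinearMap.coe_mk, AddHom.coe_mk, ← mul_assoc, h.arr_mul_vert,
    Finset.sum_mul, smul_mul_assoc, h.vert_mul_vert, DArrow.tgt_rev] at hx
  refine neg_injective ?_
  simpa [apply_ite, ite_mul, neg_ite, ← Finset.sum_neg_distrib, add_eq_zero_iff_eq_neg,
    -Fintype.sum_sum_type] using hx

/-- The action of the trivial path `e_i` on tuples `((y_a), u)`. -/
noncomputable def vertActAux (i : Fin Q.r) : (Q.DArrow → QHAlg k Q v) × QHAlg k Q v →ₗ[k]
    (Q.DArrow → QHAlg k Q v) × QHAlg k Q v :=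
  LinearMap.prodMap (LinearMap.pi fun a => if a.src = i then LinearMap.proj a else 0)
    (LinearMap.mulLeft k 𝐞[i])

lemma vertActAux_apply (i : Fin Q.r) (p : (Q.DArrow → QHAlg k Q v) × QHAlg k Q v) :
    vertActAux i p = (fun a => if a.src = i then p.1 a else 0, 𝐞[i] * p.2) := by
  refine Prod.ext (funext fun a => ?_) rfl
  by_cases ha : a.src = i <;> simp [vertActAux, ha]

lemma vertActAux_relMap (i : Fin Q.r) (p : QHAlg k Q v × (Q.DArrow → QHAlg k Q v)) :
    vertActAux i (relMap v p) =
      relMap v (𝐞[i] * p.1, fun a => if a.src = i then p.2 a else 0) := by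
  have h := isQHRep_qhGen k Q v
  have hcomm : 𝐞[i] * ∑ l, v l • 𝐞[l] = (∑ l, v l • 𝐞[l]) * 𝐞[i] := by
    simp [Finset.mul_sum, Finset.sum_mul, h.vert_mul_vert]
  rw [vertActAux_apply]
  refine Prod.ext (funext fun a => ?_) ?_
  · simp only [relMap, LinearMap.coe_mk, AddHom.coe_mk, ← mul_assoc, h.arr_mul_vert,
      DArrow.tgt_rev]
    split_ifs <;> simp
  · simp only [relMap, LinearMap.coe_mk, AddHom.coe_mk, mul_sub, ← mul_assoc, hcomm,
      Finset.mul_sum _ (fun a => 𝐚[a] * p.2 a), h.vert_mul_arr, ite_mul, mul_ite, zero_mul,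
      mul_zero]

/-- The action of the trivial path `e_i` on `Pres v`. -/
noncomputable def vertAct (i : Fin Q.r) : Pres v →ₗ[k] Pres v :=
  Submodule.mapQ _ _ (vertActAux i) <| by
    rintro _ ⟨p, rfl⟩
    exact ⟨_, (vertActAux_relMap i p).symm⟩

lemma vertAct_arrIncl (i : Fin Q.r) (a : Q.DArrow) (x : QHAlg k Q v) :
    vertAct i (arrIncl a x) = if a.src = i then arrIncl a x else 0 := by
  classical
  have hmk : vertAct i (arrIncl a x) =
      Submodule.Quotient.mk (vertActAux i (Pi.single a x, 0)) := rfl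
  rw [hmk, vertActAux_apply, mk_eq, mul_zero, map_zero, add_zero, Fintype.sum_eq_single a]
  · by_cases ha : a.src = i <;> simp [ha]
  · intro b hb
    simp [hb]

lemma vertAct_zIncl (i : Fin Q.r) (x : QHAlg k Q v) :
    vertAct i (zIncl x) = zIncl (𝐞[i] * x) := by
  have hmk : vertAct i (zIncl x) = Submodule.Quotient.mk (vertActAux i (0, x)) := rfl
  rw [hmk, vertActAux_apply, mk_eq]
  simp

/-- The action of an arrow `a` on `ᵛΛ(Q) × Pres v`, which sends `(x, m)` to `(a * x, a * (e_i * x))`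
where `i` is the target of `a` and the second product is formal. -/
noncomputable def arrAct (a : Q.DArrow) : Module.End k (QHAlg k Q v × Pres v) :=
  (LinearMap.mulLeft k 𝐚[a]).prod (arrIncl a ∘ₗ LinearMap.mulLeft k 𝐞[a.tgt]) ∘ₗ
    LinearMap.fst k _ _

/-- The action of a generator on `ᵛΛ(Q) × Pres v`. The orbit of `(1, 0)` is the graph of a
noncommutative derivative `ᵛΛ(Q) → Pres v`. -/
noncomputable def genAct (g : QHGen Q) : Module.End k (QHAlg k Q v × Pres v) :=
  match g with
  | .vert i => LinearMap.prodMap (LinearMap.mulLeft k 𝐞[i]) (vertAct i)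
  | .fwd e => arrAct (Sum.inl e)
  | .bwd e => arrAct (Sum.inr e)
  | .z => (LinearMap.mulLeft k 𝐳).prod zIncl ∘ₗ LinearMap.fst k _ _

lemma genAct_vert (i : Fin Q.r) (p : QHAlg k Q v × Pres v) :
    genAct (.vert i) p = (𝐞[i] * p.1, vertAct i p.2) := rfl

lemma genAct_arr (a : Q.DArrow) (p : QHAlg k Q v × Pres v) :
    genAct (.arr a) p = (𝐚[a] * p.1, arrIncl a (𝐞[a.tgt] * p.1)) := by
  cases a <;> rfl

lemma genAct_z (p : QHAlg k Q v × Pres v) : genAct .z p = (𝐳 * p.1, zIncl p.1) := rfl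

lemma genAct_fst (g : QHGen Q) (p : QHAlg k Q v × Pres v) :
    (genAct g p).1 = qhGen k Q v g * p.1 := by
  cases g <;> rfl

lemma vertAct_vertAct (i l : Fin Q.r) (m : Pres v) :
    vertAct i (vertAct l m) = if i = l then vertAct l m else 0 := by
  have hcomp : vertAct i ∘ₗ vertAct l = if i = l then vertAct l else (0 : Pres v →ₗ[k] Pres v) := by
    refine hom_ext (fun a x => ?_) fun x => ?_
    · rw [LinearMap.comp_apply, vertAct_arrIncl]
      obtain rfl | hl := eq_or_ne a.src l
      · by_cases hi : a.src = i
        · simp [vertAct_arrIncl, hi]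
        · simp [vertAct_arrIncl, hi, Ne.symm hi]
      · by_cases hi : i = l <;> simp [vertAct_arrIncl, hl, hi]
    · rw [LinearMap.comp_apply, vertAct_zIncl, vertAct_zIncl, ← mul_assoc,
        (isQHRep_qhGen k Q v).vert_mul_vert]
      split_ifs <;> simp [vertAct_zIncl]
  rw [← LinearMap.comp_apply, hcomp]
  split_ifs <;> rfl

lemma sum_vertAct (m : Pres v) : ∑ i, vertAct i m = m := by
  have hsum : ∑ i, vertAct i = (LinearMap.id : Pres v →ₗ[k] Pres v) := by
    refine hom_ext (fun a x => ?_) fun x => ?_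
    · simp [vertAct_arrIncl]
    · simp only [LinearMap.sum_apply, vertAct_zIncl, ← map_sum, ← Finset.sum_mul,
        (isQHRep_qhGen k Q v).vert_sum, one_mul, LinearMap.id_apply]
  rw [← LinearMap.sum_apply, hsum, LinearMap.id_apply]

lemma genAct_central (g : QHGen Q) (p : QHAlg k Q v × Pres v) :
    (genAct .z (genAct g p)).2 = (genAct g (genAct .z p)).2 := by
  have harr (a : Q.DArrow) : (genAct .z (genAct (.arr a) p)).2 =
      (genAct (.arr a) (genAct .z p)).2 := by
    simp only [genAct_z, genAct_arr]
    rw [mul_z_mul, arrIncl_z_mul, ← mul_assoc, (isQHRep_qhGen k Q v).mul_tgt]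
  cases g with
  | vert i => simp only [genAct_z, genAct_vert, vertAct_zIncl]
  | fwd e => exact harr (Sum.inl e)
  | bwd e => exact harr (Sum.inr e)
  | z => rfl

lemma genAct_heisenberg (i : Fin Q.r) (p : QHAlg k Q v × Pres v) :
    ∑ a : Q.OutArrow i, a.1.sign k • (genAct (.arr a.1) (genAct (.arr a.1.rev) p)).2 =
      v i • (genAct .z (genAct (.vert i) p)).2 := by
  simp only [genAct_arr, genAct_z, genAct_vert, ← sum_sign_smul_arrIncl]
  refine Finset.sum_congr rfl fun a _ => ?_
  rw [← mul_assoc, (isQHRep_qhGen k Q v).vert_mul_arr, if_pos a.1.src_rev]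

lemma isQHRep_genAct : IsQHRep v (genAct (v := v)) := by
  have h := isQHRep_qhGen k Q v
  refine ⟨fun i l => ?_, ?_, fun a => ?_, fun a => ?_, fun g => ?_, fun i => ?_⟩ <;>
    refine LinearMap.ext fun p => ?_
  · rw [Module.End.mul_apply, genAct_vert, genAct_vert, ← mul_assoc, h.vert_mul_vert,
      vertAct_vertAct]
    split_ifs
    · rfl
    · simp
  · simp only [LinearMap.sum_apply, genAct_vert, Module.End.one_apply]
    refine Prod.ext ?_ ?_
    · rw [Prod.fst_sum, ← Finset.sum_mul, h.vert_sum, one_mul]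
    · rw [Prod.snd_sum, sum_vertAct]
  · rw [Module.End.mul_apply, genAct_vert, genAct_arr, ← mul_assoc, h.src_mul, vertAct_arrIncl,
      if_pos rfl]
  · rw [Module.End.mul_apply, genAct_arr, genAct_vert, genAct_arr, ← mul_assoc, h.mul_tgt,
      ← mul_assoc, vert_mul_vert_self]
  · rw [Module.End.mul_apply, Module.End.mul_apply]
    refine Prod.ext ?_ (genAct_central g p)
    simp only [genAct_fst, ← mul_assoc, h.central]
  · simp only [LinearMap.sum_apply, LinearMap.smul_apply, Module.End.mul_apply]
    refine Prod.ext ?_ ?_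
    · simpa only [Prod.fst_sum, Prod.smul_fst, genAct_fst, Finset.sum_mul, smul_mul_assoc,
        mul_assoc] using congrArg (· * p.1) (h.heisenberg i)
    · simp only [Prod.snd_sum, Prod.smul_snd, genAct_heisenberg]

/-- The action of `ᵛΛ(Q)` on `ᵛΛ(Q) × Pres v`. -/
noncomputable def rep : QHAlg k Q v →ₐ[k] Module.End k (QHAlg k Q v × Pres v) :=
  isQHRep_genAct.lift

lemma rep_qhGen_mul (g : QHGen Q) (x : QHAlg k Q v) (p : QHAlg k Q v × Pres v) :
    rep (qhGen k Q v g * x) p = genAct g (rep x p) := by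
  rw [map_mul, rep, isQHRep_genAct.lift_qhGen, Module.End.mul_apply]

lemma rep_apply_fst (x : QHAlg k Q v) (p : QHAlg k Q v × Pres v) : (rep x p).1 = x * p.1 := by
  induction x using induction_left with
  | one => simp
  | add x y hx hy => simp [hx, hy, add_mul]
  | smul c x hx => simp [hx]
  | qhGen_mul g x hx => rw [rep_qhGen_mul, genAct_fst, hx, mul_assoc]

/-- The noncommutative (Fox) derivative of `ᵛΛ(Q)` with values in `Pres v`. -/
noncomputable def derivative : QHAlg k Q v →ₗ[k] Pres v :=
  LinearMap.snd k _ _ ∘ₗ LinearMap.applyₗ (1, 0) ∘ₗ rep.toLinearMap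

lemma derivative_arr_mul (a : Q.DArrow) (y : QHAlg k Q v) :
    derivative (𝐚[a] * y) = arrIncl a (𝐞[a.tgt] * y) := by
  have hrep : derivative (𝐚[a] * y) = (rep (𝐚[a] * y) (1, 0)).2 := rfl
  rw [hrep, rep_qhGen_mul, genAct_arr, rep_apply_fst, mul_one]

lemma derivative_z_mul (u : QHAlg k Q v) : derivative (𝐳 * u) = zIncl u := by
  have hrep : derivative (𝐳 * u) = (rep (𝐳 * u) (1, 0)).2 := rfl
  rw [hrep, rep_qhGen_mul, genAct_z, rep_apply_fst, mul_one]

end Pres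

/-- The derivative turns the relation into the vanishing of a class in `Pres v`, that is, into a
value of `relMap v`. -/
lemma exists_of_sum_arr_mul_eq_z_mul {y : Q.DArrow → QHAlg k Q v} {u : QHAlg k Q v}
    (hy : ∀ a, 𝐞[a.tgt] * y a = y a) (h : ∑ a, 𝐚[a] * y a = 𝐳 * u) :
    ∃ (x : QHAlg k Q v) (w : Q.DArrow → QHAlg k Q v),
      (∀ a, y a = 𝐳 * w a + a.sign k • (𝐚[a.rev] * x)) ∧
        u = (∑ i, v i • 𝐞[i]) * x + ∑ a, 𝐚[a] * w a := by
  have hmk : (Submodule.Quotient.mk (y, (-1 : k) • u) : Pres v) = 0 := by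
    have hsum : ∑ a, Pres.arrIncl a (y a) = Pres.zIncl u := by
      rw [← Pres.derivative_z_mul, ← h, map_sum]
      simp only [Pres.derivative_arr_mul, hy]
    rw [Pres.mk_eq, hsum, map_smul]
    module
  obtain ⟨⟨x, w⟩, hxw⟩ := (Submodule.Quotient.mk_eq_zero _).1 hmk
  refine ⟨(-1 : k) • x, w, fun a => ?_, ?_⟩
  · have hya : 𝐳 * w a - a.sign k • (𝐚[a.rev] * x) = y a := congrFun (congrArg Prod.fst hxw) a
    rw [← hya, mul_smul_comm]
    module
  · have hu : (∑ i, v i • 𝐞[i]) * x - ∑ a, 𝐚[a] * w a = (-1 : k) • u := congrArg Prod.snd hxw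
    rw [mul_smul_comm]
    linear_combination (norm := module) hu

end Syzygies

section Quotient

variable (k Q v) in
/-- The ideal of `ᵛΛ(Q)` generated by `z`. -/
noncomputable def zRange : Submodule k (QHAlg k Q v) := LinearMap.range (LinearMap.mulLeft k 𝐳)

lemma z_mul_mem_zRange (x : QHAlg k Q v) : 𝐳 * x ∈ zRange k Q v := ⟨x, rfl⟩

lemma mul_mem_zRange (x : QHAlg k Q v) {y : QHAlg k Q v} (hy : y ∈ zRange k Q v) :
    x * y ∈ zRange k Q v := by
  obtain ⟨w, rfl⟩ := hy
  rw [LinearMap.mulLeft_apply, mul_z_mul]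
  exact z_mul_mem_zRange _

lemma cornerProj_mem_zRange (i j : Fin Q.r) (n : ℕ) {x : QHAlg k Q v} (hx : x ∈ zRange k Q v) :
    cornerProj i j n x ∈ zRange k Q v := by
  obtain ⟨w, rfl⟩ := hx
  rw [LinearMap.mulLeft_apply]
  match n with
  | 0 => exact cornerProj_zero (𝐳 * w) ▸ zero_mem _
  | 1 => exact cornerProj_one_z_mul w ▸ zero_mem _
  | n + 2 => exact cornerProj_z_mul n w ▸ z_mul_mem_zRange _

/-- The images of the generators under the augmentation `ᵛΛ(Q) → k^{Q₀}`, which kills the arrows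
and `z`. -/
def augmentationGen : QHGen Q → Fin Q.r → k
  | .vert i => Pi.single i 1
  | _ => 0

lemma augmentationGen_arr (a : Q.DArrow) : augmentationGen (k := k) (.arr a) = 0 := by
  cases a <;> rfl

lemma isQHRep_augmentationGen : IsQHRep v (augmentationGen (k := k) (Q := Q)) := by
  refine ⟨fun i l => ?_, Finset.univ_sum_single _, fun a => ?_, fun a => ?_, fun g => ?_,
    fun i => ?_⟩
  · ext m
    by_cases h : i = l <;> by_cases hm : m = l <;> simp_all [augmentationGen]
  · rw [augmentationGen_arr, mul_zero]
  · rw [augmentationGen_arr, zero_mul]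
  · simp [augmentationGen]
  · simp only [augmentationGen_arr]
    simp [augmentationGen]

lemma vert_notMem_zRange (j : Fin Q.r) : 𝐞[j] ∉ zRange k Q v := by
  rintro ⟨w, hw⟩
  have hlift := congrArg (isQHRep_augmentationGen (v := v)).lift hw
  rw [LinearMap.mulLeft_apply, map_mul, IsQHRep.lift_qhGen, IsQHRep.lift_qhGen] at hlift
  simpa [augmentationGen] using congrFun hlift j

lemma corner_one_inf_zRange (i j : Fin Q.r) : corner i j 1 ⊓ zRange k Q v = ⊥ := by
  rw [Submodule.eq_bot_iff]
  rintro _ ⟨hx, w, rfl⟩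
  rw [← mem_corner_iff.1 hx]
  exact cornerProj_one_z_mul w

lemma corner_add_two_inf_zRange (i j : Fin Q.r) (n : ℕ) :
    corner i j (n + 2) ⊓ zRange k Q v = (corner i j n).map (LinearMap.mulLeft k 𝐳) := by
  ext x
  constructor
  · rintro ⟨hx, w, rfl⟩
    exact ⟨_, cornerProj_mem_corner n w, (cornerProj_z_mul n w).symm.trans (mem_corner_iff.1 hx)⟩
  · rintro ⟨w, hw, rfl⟩
    refine ⟨mem_corner_iff.2 ?_, z_mul_mem_zRange w⟩
    rw [LinearMap.mulLeft_apply, cornerProj_z_mul, mem_corner_iff.1 hw]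

lemma corner_one (i j : Fin Q.r) :
    corner (v := v) i j 1 = Submodule.span k {𝐞[i] * 𝐞[j]} := by
  have hone : cornerProj i j 1 (1 : QHAlg k Q v) = 𝐞[i] * 𝐞[j] := by
    have hproj : proj 1 (1 : QHAlg k Q v) = 1 := by simpa using proj_list_prod (v := v) 1 []
    rw [cornerProj_apply, hproj, one_mul]
  have hvert (l : Fin Q.r) : cornerProj i j 1 𝐞[l] = if i = l then 𝐞[i] * 𝐞[j] else 0 := by
    rw [← hone, ← cornerProj_vert_mul, mul_one]
  have harr (a : Q.DArrow) (y : QHAlg k Q v) : cornerProj i j 1 (𝐚[a] * y) = 0 := by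
    simpa [cornerProj_zero] using cornerProj_arr_mul (i := i) (j := j) 0 a y
  refine le_antisymm ?_ ?_
  · rintro _ ⟨x, rfl⟩
    obtain ⟨c, y, u, rfl⟩ := exists_eq_sum_vert_add x
    refine Submodule.mem_span_singleton.2 ⟨c i, ?_⟩
    simp [-Fintype.sum_sum_type, hvert, harr, cornerProj_one_z_mul]
  · rw [Submodule.span_singleton_le_iff_mem, ← hone]
    exact cornerProj_mem_corner 1 1

lemma arr_mul_mem_corner {j : Fin Q.r} {n : ℕ} {a : Q.DArrow} {x : QHAlg k Q v}
    (hx : x ∈ corner a.tgt j n) : 𝐚[a] * x ∈ corner a.src j (n + 1) := by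
  rw [mem_corner_iff, cornerProj_arr_mul, if_pos rfl, mem_corner_iff.1 hx]

lemma sum_sign_smul_arr_mul_mem_zRange {i : Fin Q.r} {x : QHAlg k Q v} (hx : 𝐞[i] * x = x) :
    ∑ a : Q.OutArrow i, a.1.sign k • (𝐚[a.1] * (𝐚[a.1.rev] * x)) ∈ zRange k Q v := by
  have hmesh : ∑ a : Q.OutArrow i, a.1.sign k • (𝐚[a.1] * (𝐚[a.1.rev] * x)) =
      𝐳 * (v i • x) := by
    simpa only [Finset.sum_mul, smul_mul_assoc, mul_smul_comm, mul_assoc, hx] using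
      congrArg (· * x) ((isQHRep_qhGen k Q v).heisenberg i)
  exact hmesh ▸ z_mul_mem_zRange _

lemma exists_of_sum_arr_mul_mem_zRange {i j : Fin Q.r} {n : ℕ} {y : Q.OutArrow i → QHAlg k Q v}
    (hy : ∀ a, y a ∈ corner a.1.tgt j (n + 1)) (h : ∑ a, 𝐚[a.1] * y a ∈ zRange k Q v) :
    ∃ x ∈ corner i j n, ∀ a, y a - a.1.sign k • (𝐚[a.1.rev] * x) ∈ zRange k Q v := by
  obtain ⟨u, hu⟩ := h
  let y' : Q.DArrow → QHAlg k Q v := Function.extend Subtype.val y 0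
  have hy'_out (a : Q.OutArrow i) : y' a.1 = y a := Subtype.val_injective.extend_apply y 0 a
  have hy'_of_ne (a : Q.DArrow) (ha : a.src ≠ i) : y' a = 0 :=
    Function.extend_apply' _ _ _ fun ⟨b, hb⟩ => ha (hb ▸ b.2)
  have hy' (a : Q.DArrow) : 𝐞[a.tgt] * y' a = y' a := by
    by_cases ha : a.src = i
    · exact hy'_out ⟨a, ha⟩ ▸ vert_mul_of_mem_corner (hy ⟨a, ha⟩)
    · rw [hy'_of_ne a ha, mul_zero]
  have hsum : ∑ a, 𝐚[a] * y' a = 𝐳 * u := by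
    have hres : ∑ a : Q.OutArrow i, 𝐚[a.1] * y' a = ∑ a, 𝐚[a] * y' a := by
      rw [sum_outArrow i fun a => 𝐚[a] * y' a]
      refine Finset.sum_congr rfl fun a _ => ?_
      split_ifs with ha
      · rfl
      · rw [hy'_of_ne a ha, mul_zero]
    rw [← hres]
    simpa only [hy'_out, LinearMap.mulLeft_apply] using hu.symm
  obtain ⟨x, w, hxw, -⟩ := exists_of_sum_arr_mul_eq_z_mul hy' hsum
  refine ⟨cornerProj i j n x, cornerProj_mem_corner n x, fun ⟨a, ha⟩ => ?_⟩
  have hya : y ⟨a, ha⟩ - a.sign k • (𝐚[a.rev] * cornerProj i j n x) =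
      cornerProj a.tgt j (n + 1) (𝐳 * w a) := by
    rw [← mem_corner_iff.1 (hy ⟨a, ha⟩), ← hy'_out, hxw, map_add, map_smul, cornerProj_arr_mul,
      if_pos a.src_rev, DArrow.tgt_rev, ha, add_sub_cancel_right]
  exact hya ▸ cornerProj_mem_zRange _ _ _ (z_mul_mem_zRange (w a))

/-- Left multiplication on the quotient of `ᵛΛ(Q)` by `z`. -/
noncomputable def quotMulLeft (x : QHAlg k Q v) :
    (QHAlg k Q v ⧸ zRange k Q v) →ₗ[k] (QHAlg k Q v ⧸ zRange k Q v) :=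
  Submodule.mapQ _ _ (LinearMap.mulLeft k x) fun _ hy => mul_mem_zRange x hy

variable (v) in
/-- Modulo `z`, the algebra `ᵛΛ(Q)` is the preprojective algebra `Π`; this is its left ideal
`Π e_j`. -/
noncomputable def meshRep (j : Fin Q.r) : MeshRep k Q (QHAlg k Q v ⧸ zRange k Q v) where
  act a := quotMulLeft 𝐚[a]
  W n i := (corner i j n).map (zRange k Q v).mkQ
  root := j
  gen := (zRange k Q v).mkQ 𝐞[j]
  act_mem := by
    rintro n a _ ⟨x, hx, rfl⟩
    exact ⟨_, arr_mul_mem_corner hx, rfl⟩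
  mesh := by
    rintro n i _ ⟨x, hx, rfl⟩
    have h := (Submodule.Quotient.mk_eq_zero _).2
      (sum_sign_smul_arr_mul_mem_zRange (vert_mul_of_mem_corner hx))
    rw [← Submodule.mkQ_apply, map_sum] at h
    exact h
  W_zero i := by rw [corner_zero, Submodule.map_bot]
  W_one_root := by
    rw [corner_one, vert_mul_vert_self, Submodule.map_span, Set.image_singleton]
  W_one_of_ne hi := by
    rw [corner_one, (isQHRep_qhGen k Q v).vert_mul_vert, if_neg hi, Submodule.span_zero_singleton,
      Submodule.map_bot]
  gen_ne_zero := fun h => vert_notMem_zRange j ((Submodule.Quotient.mk_eq_zero _).1 h)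
  exists_sum_act := by
    rintro n i _ ⟨x, hx, rfl⟩
    obtain ⟨y, u, hxy⟩ := exists_cornerProj_eq x
    refine ⟨fun a => (zRange k Q v).mkQ (cornerProj a.1.tgt j (n + 1) (y a)),
      fun a => ⟨_, cornerProj_mem_corner _ _, rfl⟩, ?_⟩
    rw [← mem_corner_iff.1 hx, hxy, map_add, map_sum, Submodule.mkQ_apply _ (𝐳 * _),
      (Submodule.Quotient.mk_eq_zero _).2 (z_mul_mem_zRange _), add_zero]
    rfl
  exists_of_sum_act_eq_zero := by
    intro n i f hf h
    choose y hy hyf using hf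
    obtain rfl := funext hyf
    have hsum : (zRange k Q v).mkQ (∑ a, 𝐚[a.1] * y a) = 0 := by rw [map_sum]; exact h
    obtain ⟨x, hx, hxy⟩ :=
      exists_of_sum_arr_mul_mem_zRange hy ((Submodule.Quotient.mk_eq_zero _).1 hsum)
    exact ⟨_, ⟨x, hx, rfl⟩, fun a => (Submodule.Quotient.eq _).2 (hxy a)⟩

end Quotient

section Regular

lemma mem_zRange_of_arr_mul (hconn : Q.Connected) (hnd : ¬ Q.IsDynkin) {x : QHAlg k Q v}
    (h : ∀ a, 𝐚[a] * x ∈ zRange k Q v) : x ∈ zRange k Q v := by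
  refine mem_of_forall_cornerProj_mem fun i j n => ?_
  refine (Submodule.Quotient.mk_eq_zero _).1 <| (meshRep v j).socleFree hconn hnd n i _
    ⟨_, cornerProj_mem_corner n x, rfl⟩ fun a ha => ?_
  have hax := cornerProj_mem_zRange a.src j (n + 1) (h a)
  rw [cornerProj_arr_mul, if_pos rfl, ha] at hax
  exact (Submodule.Quotient.mk_eq_zero _).2 hax

lemma sum_sign_smul_arr_mul_arr_rev :
    ∑ a : Q.DArrow, a.sign k • (𝐚[a] * 𝐚[a.rev]) = 𝐳 * ∑ i, v i • 𝐞[i] := by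
  simp only [Finset.mul_sum, mul_smul_comm, ← (isQHRep_qhGen k Q v).heisenberg]
  simp only [sum_outArrow _ fun a => a.sign k • (𝐚[a] * 𝐚[a.rev])]
  rw [Finset.sum_comm]
  simp [-Fintype.sum_sum_type]

lemma exists_of_z_mul_eq_zero (hconn : Q.Connected) (hnd : ¬ Q.IsDynkin) {y : QHAlg k Q v}
    (hy : 𝐳 * y = 0) : ∃ u : Q.DArrow → QHAlg k Q v, (∀ a, 𝐳 * u a = 0) ∧ y = ∑ a, 𝐚[a] * u a := by
  obtain ⟨x, w, hxw, rfl⟩ := exists_of_sum_arr_mul_eq_z_mul (y := fun _ => 0) (u := y)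
    (fun a => mul_zero 𝐞[a.tgt]) (by simp [hy])
  obtain ⟨x, rfl⟩ : x ∈ zRange k Q v := by
    refine mem_zRange_of_arr_mul hconn hnd fun a => ?_
    have ha : a.rev.sign k • (𝐚[a] * x) ∈ zRange k Q v := by
      rw [← Submodule.add_mem_iff_right _ (z_mul_mem_zRange (w a.rev))]
      have h0 := hxw a.rev
      rw [DArrow.rev_rev] at h0
      exact h0 ▸ zero_mem _
    exact (Submodule.smul_mem_iff _ (a.rev.sign_ne_zero k)).1 ha
  simp only [LinearMap.mulLeft_apply, mul_z_mul] at hxw ⊢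
  refine ⟨fun a => w a + a.sign k • (𝐚[a.rev] * x), fun a => ?_, ?_⟩
  · rw [mul_add, mul_smul_comm, ← hxw]
  · rw [← mul_assoc, ← sum_sign_smul_arr_mul_arr_rev, Finset.sum_mul, ← Finset.sum_add_distrib]
    refine Finset.sum_congr rfl fun a _ => ?_
    rw [smul_mul_assoc, mul_assoc, mul_add, mul_smul_comm, add_comm]

lemma eq_zero_of_z_mul_eq_zero (hconn : Q.Connected) (hnd : ¬ Q.IsDynkin) {y : QHAlg k Q v}
    (hy : 𝐳 * y = 0) : y = 0 := by
  rw [← Submodule.mem_bot k]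
  refine mem_of_forall_cornerProj_mem fun i j n => ?_
  rw [Submodule.mem_bot]
  induction n generalizing y i with
  | zero => exact cornerProj_zero y
  | succ n ih =>
    obtain ⟨u, hu, rfl⟩ := exists_of_z_mul_eq_zero hconn hnd hy
    simp only [map_sum, cornerProj_arr_mul, ih (hu _), mul_zero, ite_self, Finset.sum_const_zero]

end Regular

section Dimensions

open Module

instance finite_corner (i j : Fin Q.r) (n : ℕ) : Module.Finite k (corner (v := v) i j n) := by
  have key (n : ℕ) (h : (corner i j n ⊓ zRange k Q v).FG) : (corner (v := v) i j n).FG :=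
    Submodule.fg_of_fg_map_of_fg_inf_ker (zRange k Q v).mkQ
      (Module.Finite.iff_fg.1 ((meshRep v j).finite_W n i)) (by rwa [Submodule.ker_mkQ])
  rw [Module.Finite.iff_fg]
  induction n using Nat.twoStepInduction with
  | zero => rw [corner_zero]; exact Submodule.fg_bot
  | one => exact key 1 (by rw [corner_one_inf_zRange]; exact Submodule.fg_bot)
  | more n ih _ => exact key (n + 2) (by rw [corner_add_two_inf_zRange]; exact ih.map _)

lemma finrank_corner (i j : Fin Q.r) (n : ℕ) :
    finrank k (corner (v := v) i j n) = finrank k ((meshRep v j).W n i) +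
      finrank k (corner i j n ⊓ zRange k Q v : Submodule k (QHAlg k Q v)) :=
  finrank_eq_finrank_map_mkQ_add_finrank_inf _ _

lemma finrank_corner_one (i j : Fin Q.r) :
    finrank k (corner (v := v) i j 1) = finrank k ((meshRep v j).W 1 i) := by
  rw [finrank_corner, corner_one_inf_zRange, finrank_bot, add_zero]

lemma finrank_corner_add_two (hconn : Q.Connected) (hnd : ¬ Q.IsDynkin) (i j : Fin Q.r) (n : ℕ) :
    finrank k (corner (v := v) i j (n + 2)) =
      finrank k ((meshRep v j).W (n + 2) i) + finrank k (corner (v := v) i j n) := by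
  have hinj : Function.Injective (LinearMap.mulLeft k 𝐳) :=
    (injective_iff_map_eq_zero _).2 fun _ h => eq_zero_of_z_mul_eq_zero hconn hnd h
  rw [finrank_corner, corner_add_two_inf_zRange,
    ← (Submodule.equivMapOfInjective _ hinj (corner i j n)).finrank_eq]

lemma finrank_corner_eq {k' : Type} [Field k'] (hconn : Q.Connected) (hnd : ¬ Q.IsDynkin)
    (v : Fin Q.r → k) (w : Fin Q.r → k') (i j : Fin Q.r) (n : ℕ) :
    finrank k (corner (v := v) i j n) = finrank k' (corner (v := w) i j n) := by
  have hW (n : ℕ) : finrank k ((meshRep v j).W n i) = finrank k' ((meshRep w j).W n i) :=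
    (meshRep v j).finrank_W_eq (meshRep w j) rfl hconn hnd n i
  induction n using Nat.twoStepInduction with
  | zero => rw [corner_zero, corner_zero, finrank_bot, finrank_bot]
  | one => rw [finrank_corner_one, finrank_corner_one, hW]
  | more n ih _ =>
    rw [finrank_corner_add_two hconn hnd, finrank_corner_add_two hconn hnd, hW, ih]

end Dimensions

end QHAlg

theorem quiver_heisenberg_graded_dims_independent_of_parameter_general {k k' : Type} [Field k]
    [Field k'] (Q : FinQuiver) (hconn : Q.Connected) (hnd : ¬ Q.IsDynkin) (v : Fin Q.r → k)
    (w : Fin Q.r → k') (n : ℕ) (i j : Fin Q.r) :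
    FiniteDimensional k (qhCorner k Q v n i j) ∧
      Module.finrank k (qhCorner k Q v n i j) = Module.finrank k' (qhCorner k' Q w n i j) := by
  rw [QHAlg.qhCorner_eq_corner, QHAlg.qhCorner_eq_corner]
  exact ⟨inferInstance, QHAlg.finrank_corner_eq hconn hnd v w i j (n + 1)⟩

/-- **The graded dimensions of the quiver Heisenberg algebra of a non-Dynkin
quiver do not depend on the parameter.**  For a connected finite acyclic
non-Dynkin quiver `Q` and any `v, w ∈ k^{Q₀}`, every graded piece is finite
dimensional and `dim_k e_i (ᵛΛ(Q)_n) e_j = dim_k e_i (ʷΛ(Q)_n) e_j` for all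
`n ≥ 0` and all vertices `i, j`.  In particular the Hilbert series formula for
sincere `v` extends to arbitrary `v`. -/
theorem quiver_heisenberg_graded_dims_independent_of_parameter
    (k : Type) [Field k] (Q : FinQuiver) (hr : 0 < Q.r)
    (hconn : Q.Connected) (hacyc : Q.Acyclic) (hnd : ¬ Q.IsDynkin)
    (v w : Fin Q.r → k) :
    (∀ (n : ℕ) (i j : Fin Q.r), FiniteDimensional k (qhCorner k Q v n i j)) ∧
    (∀ (n : ℕ) (i j : Fin Q.r),
      Module.finrank k (qhCorner k Q v n i j) =
        Module.finrank k (qhCorner k Q w n i j)) := by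
  have h := quiver_heisenberg_graded_dims_independent_of_parameter_general Q hconn hnd v w
  exact ⟨fun n i j => (h n i j).1, fun n i j => (h n i j).2⟩
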